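/- Let s, t, α be positive integers with 2 ≤ α, α < s and α < t, let G be a finite abelian group with line set 𝓛 making (G,𝓛) a proper partial geometry pg(s,t,α) admitting G as an abelian Singer group with the pair of rigid type (axioms (i)–(vi) of the encoding), and assume s > 2α − 1. Then every prime divisor of Δ = (s + t − α + 1)² (equivalently, every prime divisor of s + t − α + 1) divides s + 1. -/

import Mathlib

/-- Encoding of a partial geometry `pg(s,t,α)` whose point set is the abelian group `G`,
admitting `G` (acting by translation) as an abelian Singer group; the lines are the finite
subsets of `G` collected in `𝓛`.  Axioms (i)–(v). -/
structure IsPGSinger (G : Type*) [CommGroup G] [DecidableEq G]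
    (𝓛 : Set (Finset G)) (s t α : ℕ) : Prop where
  /-- (i) every line has exactly `s+1` points -/
  line_card : ∀ L ∈ 𝓛, L.card = s + 1
  /-- (ii) every point lies on exactly `t+1` lines -/
  point_deg : ∀ x : G, {L | L ∈ 𝓛 ∧ x ∈ L}.ncard = t + 1
  /-- (iii) two distinct lines share at most one point -/
  line_inter : ∀ L ∈ 𝓛, ∀ M ∈ 𝓛, L ≠ M → ((L : Set G) ∩ (M : Set G)).ncard ≤ 1
  /-- (iv) for a non-incident point–line pair `(x,L)`, exactly `α` lines through `x` meet `L` -/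
  alpha_ax : ∀ x : G, ∀ L ∈ 𝓛, x ∉ L →
    {M | M ∈ 𝓛 ∧ x ∈ M ∧ ∃ y ∈ L, y ∈ M}.ncard = α
  /-- (v) the line set is closed under translation by elements of `G` -/
  translate : ∀ g : G, ∀ L ∈ 𝓛, L.image (fun y => g * y) ∈ 𝓛

/-- (vi) The pair `(S,G)` is of rigid type: every line has trivial stabilizer in `G`. -/
def RigidType (G : Type*) [CommGroup G] [DecidableEq G] (𝓛 : Set (Finset G)) : Prop :=
  ∀ g : G, ∀ L ∈ 𝓛, L.image (fun y => g * y) = L → g = 1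

/-!
Put `n = s + t + 1 - α` and let `E` be the sum of the lines through `1` in `ℤ[G]`. Then `E² = n E`
up to a multiple of the sum of all group elements, so a nontrivial character maps `E` to `0` or `n`.

Suppose that a prime `p` divides `n` but not `s + 1`. Split `G = A × B` with `A` of `p`-power order
`N` and `|B|` prime to `p`, and put `q = gcd(n, N)`. Since rigidity makes `G` act freely on the
lines, counting flags gives `s + 1 ∣ t + 1`, and then `q (s + 1) ∣ t + 1`.
* In `ℤ[A]` an element of augmentation prime to `p` is not a zero divisor. A line has such an image,
  and up to a multiple of the sum of all elements it is annihilated by `E - n`; hence the image of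
  `E - n` has constant coefficients, and the constant `c` satisfies `N c = s t + α`.
* In `ℤ[B]`, where `p` is unramified, every coefficient of the image of `E` is divisible by `q`, so
  it is either `0` or at least `q`. Comparing the sum of the coefficients with the sum of their
  squares gives `q s ≤ s - α + α N`.
* A character of `G` that is nontrivial on `B` takes an integer value `u` on the part of `n - E`
  supported on `B`, and `N u` is a sum of terms `0` and `n`. Hence `n u ≤ q u²`, and summing over
  the characters gives `n s ≤ q ((s + 1) (s - α) + c)`.

The two inequalities force `N = q`, which contradicts the first of them.
-/

namespace SingerGroup

open Finset MonoidAlgebra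

section GroupAlgebra

lemma sum_single_coeff {R G : Type*} [Semiring R] [Fintype G] (x : R[G]) :
    ∑ g, single g (x.coeff g) = x := by
  classical
  ext h
  simp

variable {R G A : Type*} [CommRing R] [CommGroup G] [CommGroup A]

/-- The augmentation homomorphism of the group algebra, summing the coefficients. -/
noncomputable def aug (R G : Type*) [CommRing R] [CommGroup G] : R[G] →ₐ[R] R :=
  MonoidAlgebra.lift R R G 1

lemma aug_single (g : G) (r : R) : aug R G (single g r) = r := by
  simp [aug]

lemma aug_eq_sum_coeff [Fintype G] (x : R[G]) : aug R G x = ∑ g, x.coeff g := by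
  conv_lhs => rw [← sum_single_coeff x]
  simp [aug_single]

lemma aug_mapDomainRingHom (f : G →* A) (x : R[G]) :
    aug R A (mapDomainRingHom R f x) = aug R G x := by
  have h : (aug R A : R[A] →+* R).comp (mapDomainRingHom R f) = aug R G :=
    ringHom_ext (fun r => by simp [aug_single]) fun g => by simp [aug_single]
  exact congr($h x)

/-- The sum in the group algebra of the elements of a finite subset of the group. -/
noncomputable def indicator (R : Type*) {G : Type*} [Semiring R] (S : Finset G) : R[G] :=
  ∑ g ∈ S, single g 1

lemma coeff_indicator {R G : Type*} [Semiring R] [DecidableEq G] (S : Finset G) (g : G) :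
    (indicator R S).coeff g = if g ∈ S then 1 else 0 := by
  simp [indicator, coeff_sum, Finsupp.finsetSum_apply, Finsupp.single_apply]

lemma aug_indicator (S : Finset G) : aug R G (indicator R S) = #S := by
  simp [indicator, aug_single]

lemma coeff_mul_eq_sum [Fintype G] (x y : R[G]) (g : G) :
    (x * y).coeff g = ∑ h, x.coeff (g * h⁻¹) * y.coeff h := by
  conv_lhs => rw [← sum_single_coeff y]
  simp [Finset.mul_sum, coeff_sum, Finsupp.finsetSum_apply, coeff_mul_single_apply]

lemma coeff_mul_indicator (x : R[G]) (S : Finset G) (g : G) :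
    (x * indicator R S).coeff g = ∑ h ∈ S, x.coeff (g * h⁻¹) := by
  simp [indicator, Finset.mul_sum, coeff_sum, Finsupp.finsetSum_apply, coeff_mul_single_apply]

lemma mul_indicator_univ [Fintype G] (x : R[G]) :
    x * indicator R univ = aug R G x • indicator R univ := by
  classical
  ext g
  simp [coeff_mul_indicator, coeff_indicator, aug_eq_sum_coeff,
    Fintype.sum_equiv (Equiv.divLeft g) (fun h => x.coeff (g * h⁻¹)) x.coeff
      fun h => by simp [div_eq_mul_inv]]

lemma coeff_mapDomainRingHom [Fintype G] [DecidableEq A] (f : G →* A) (x : R[G]) (a : A) :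
    (mapDomainRingHom R f x).coeff a = ∑ g with f g = a, x.coeff g := by
  conv_lhs => rw [← sum_single_coeff x]
  simp [coeff_sum, Finsupp.finsetSum_apply, Finsupp.single_apply, Finset.sum_filter]

lemma card_ker_mul_card [Fintype G] [Fintype A] {f : G →* A} (hf : Function.Surjective f) :
    Nat.card f.ker * Fintype.card A = Fintype.card G := by
  rw [← Nat.card_eq_fintype_card, ← Nat.card_eq_fintype_card, ← f.ker.card_mul_index,
    Subgroup.index_ker, f.range_eq_top_of_surjective hf, Subgroup.card_top]

lemma mapDomainRingHom_indicator_univ [Fintype G] [Fintype A] {f : G →* A}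
    (hf : Function.Surjective f) :
    mapDomainRingHom R f (indicator R univ) = (Nat.card f.ker : R) • indicator R univ := by
  classical
  ext a
  obtain ⟨g, rfl⟩ := hf a
  have hfiber : Nat.card f.ker = #{h | f h = f g} := by
    rw [← Nat.card_congr (f.fiberEquivKer g)]
    exact Nat.subtype_card _ (by simp)
  rw [coeff_mapDomainRingHom, hfiber]
  simp [coeff_indicator]

end GroupAlgebra

section Divisibility

variable {G : Type*} [CommGroup G]

lemma natCast_dvd_iff_coeff {m : ℕ} {x : ℤ[G]} :
    (m : ℤ[G]) ∣ x ↔ ∀ g, (m : ℤ) ∣ x.coeff g := by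
  refine ⟨?_, fun h => ?_⟩
  · rintro ⟨y, rfl⟩ g
    exact ⟨y.coeff g, by rw [← nsmul_eq_mul, coeff_smul_apply, nsmul_eq_mul]⟩
  · choose c hc using h
    refine ⟨ofCoeff (x.coeff.mapRange (· / (m : ℤ)) (by simp)), ?_⟩
    ext g
    rw [← nsmul_eq_mul, coeff_smul_apply, nsmul_eq_mul]
    exact (Int.mul_ediv_cancel' ⟨c g, hc g⟩).symm

lemma mapRingHom_castRingHom_eq_zero_iff {p : ℕ} {x : ℤ[G]} :
    mapRingHom G (Int.castRingHom (ZMod p)) x = 0 ↔ (p : ℤ[G]) ∣ x := by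
  rw [natCast_dvd_iff_coeff, MonoidAlgebra.ext_iff, Finsupp.ext_iff]
  simp [coeff_mapRingHom, ZMod.intCast_zmod_eq_zero_iff_dvd]

lemma aug_mapRingHom {R S : Type*} [CommRing R] [CommRing S] (f : R →+* S) (x : R[G]) :
    aug S G (mapRingHom G f x) = f (aug R G x) := by
  have h : (aug S G : S[G] →+* S).comp (mapRingHom G f) = f.comp (aug R G : R[G] →+* R) :=
    ringHom_ext (fun r => by simp [aug_single]) fun g => by simp [aug_single]
  exact congr($h x)

lemma pow_card_eq_algebraMap_aug {p a : ℕ} [Fact p.Prime] (hG : Nat.card G = p ^ a)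
    (x : (ZMod p)[G]) : x ^ p ^ a = algebraMap (ZMod p) _ (aug (ZMod p) G x) := by
  have : CharP (ZMod p)[G] p :=
    charP_of_injective_algebraMap (FaithfulSMul.algebraMap_injective (ZMod p) _) p
  have h : iterateFrobenius (ZMod p)[G] p a =
      (algebraMap (ZMod p) (ZMod p)[G]).comp (aug (ZMod p) G : (ZMod p)[G] →+* ZMod p) :=
    ringHom_ext (fun r => by simp [iterateFrobenius_def, aug_single, single_pow])
      fun g => by simp [iterateFrobenius_def, aug_single, single_pow, ← hG]
  simpa [iterateFrobenius_def] using congr($h x)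

lemma isCoprime_natCast_of_isPGroup [Finite G] {p : ℕ} [Fact p.Prime] (hG : IsPGroup p G)
    {x : ℤ[G]} (hx : ¬ (p : ℤ) ∣ aug ℤ G x) : IsCoprime x (p : ℤ[G]) := by
  obtain ⟨a, ha⟩ := IsPGroup.iff_card.mp hG
  have hp : Prime (p : ℤ) := Nat.prime_iff_prime_int.mp Fact.out
  have hdvd : (p : ℤ[G]) ∣ x ^ p ^ a - algebraMap ℤ _ (aug ℤ G x) := by
    rw [← mapRingHom_castRingHom_eq_zero_iff, map_sub, map_pow, pow_card_eq_algebraMap_aug ha,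
      aug_mapRingHom]
    simp
  obtain ⟨y, hy⟩ := hdvd
  have hcop : IsCoprime (algebraMap ℤ ℤ[G] (aug ℤ G x)) (p : ℤ[G]) := by
    simpa using ((hp.coprime_iff_not_dvd.mpr hx).symm.map (algebraMap ℤ ℤ[G]))
  rw [← IsCoprime.pow_left_iff (m := p ^ a) (pow_pos (Fact.out : p.Prime).pos a),
    sub_eq_iff_eq_add'.mp hy]
  exact hcop.add_mul_left_left y

lemma eq_zero_of_forall_pow_dvd {p : ℕ} (hp : 1 < p) {x : ℤ[G]}
    (hx : ∀ k, (p : ℤ[G]) ^ k ∣ x) : x = 0 := by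
  ext g
  by_contra hg
  have hfin : FiniteMultiplicity (p : ℤ) (x.coeff g) :=
    Int.finiteMultiplicity_iff.mpr ⟨by rw [Int.natAbs_natCast]; exact hp.ne', hg⟩
  obtain ⟨k, hk⟩ := hfin
  have hxk : ((p ^ (k + 1) : ℕ) : ℤ[G]) ∣ x := by rw [Nat.cast_pow]; exact hx _
  apply hk
  rw [← Nat.cast_pow]
  exact natCast_dvd_iff_coeff.mp hxk g

lemma eq_zero_of_isPGroup_of_mul_eq_zero [Finite G] {p : ℕ} [Fact p.Prime] (hG : IsPGroup p G)
    {x y : ℤ[G]} (hx : ¬ (p : ℤ) ∣ aug ℤ G x) (hxy : x * y = 0) : y = 0 := by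
  refine eq_zero_of_forall_pow_dvd (Fact.out : p.Prime).one_lt fun k => ?_
  exact (isCoprime_natCast_of_isPGroup hG hx).symm.pow_left.dvd_of_dvd_mul_left
    (hxy ▸ dvd_zero _)

lemma isRadical_natCast [Finite G] {p : ℕ} [Fact p.Prime] (hG : ¬ p ∣ Nat.card G) :
    IsRadical (p : ℤ[G]) := by
  have : NeZero (Nat.card G : ZMod p) := ⟨by rwa [Ne, ZMod.natCast_eq_zero_iff]⟩
  intro k x hk
  rw [← mapRingHom_castRingHom_eq_zero_iff] at hk ⊢
  exact eq_zero_of_pow_eq_zero (n := k) (by rw [← map_pow, hk])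

end Divisibility

section Radical

lemma pow_dvd_of_mul_self_eq_mul {S : Type*} [CommRing S] {π N x : S} (hrad : IsRadical π)
    (hreg : IsLeftRegular π) (hx : x * x = N * x) {f : ℕ} (hN : π ^ f ∣ N) : π ^ f ∣ x := by
  obtain ⟨M, rfl⟩ := hN
  suffices h : ∀ j ≤ f, π ^ j ∣ x from h f le_rfl
  intro j hj
  induction j with
  | zero => simp
  | succ j ih =>
    obtain ⟨y, rfl⟩ := ih (by lia)
    obtain ⟨i, rfl⟩ := Nat.exists_eq_add_of_le hj
    have hy : y ^ 2 = π * (π ^ i * M * y) :=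
      hreg.pow (j + j) <| by simp only; linear_combination hx
    exact pow_succ π j ▸ mul_dvd_mul_left _ (hrad 2 y ⟨_, hy⟩)

lemma isLeftRegular_natCast {G : Type*} [CommGroup G] {m : ℕ} (hm : m ≠ 0) :
    IsLeftRegular (m : ℤ[G]) := by
  intro x y hxy
  simp only [← nsmul_eq_mul] at hxy
  exact smul_right_injective _ hm hxy

end Radical

section Quotients

variable {G : Type*} [CommGroup G] [Fintype G]

lemma aug_smul_eq_of_isPGroup_of_mul_eq {p : ℕ} [Fact p.Prime] (hG : IsPGroup p G) {x y : ℤ[G]}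
    {m : ℤ} (hy : ¬ (p : ℤ) ∣ aug ℤ G y) (hxy : x * y = m • indicator ℤ univ) :
    aug ℤ G y • x = m • indicator ℤ univ := by
  rw [← sub_eq_zero]
  refine eq_zero_of_isPGroup_of_mul_eq_zero hG hy ?_
  rw [mul_sub, mul_smul_comm, mul_comm y x, hxy, mul_smul_comm, mul_indicator_univ, smul_comm,
    sub_self]

lemma aug_mul_self_of_mul_self_eq {x : ℤ[G]} {n m : ℤ}
    (hx : x * x = n • x + m • indicator ℤ univ) :
    aug ℤ G x * aug ℤ G x = n * aug ℤ G x + m * Fintype.card G := by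
  simpa [aug_indicator] using congr(aug ℤ G $hx)

lemma card_smul_sub_aug_smul_mul_self {x : ℤ[G]} {n m : ℤ}
    (hx : x * x = n • x + m • indicator ℤ univ) :
    ((Fintype.card G : ℤ) • x - aug ℤ G x • indicator ℤ univ) *
        ((Fintype.card G : ℤ) • x - aug ℤ G x • indicator ℤ univ) =
      ((n * Fintype.card G : ℤ) : ℤ[G]) *
        ((Fintype.card G : ℤ) • x - aug ℤ G x • indicator ℤ univ) := by
  set v : ℤ := (Fintype.card G : ℤ)
  set J : ℤ[G] := indicator ℤ univ
  have haug := congr(Int.cast (R := ℤ[G]) $(aug_mul_self_of_mul_self_eq hx))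
  have hxJ : x * J = (aug ℤ G x : ℤ[G]) * J := by rw [mul_indicator_univ, zsmul_eq_mul]
  have hJJ : J * J = (v : ℤ[G]) * J := by
    rw [mul_indicator_univ, aug_indicator, zsmul_eq_mul, card_univ]
  simp only [zsmul_eq_mul, Int.cast_mul, Int.cast_add] at hx haug ⊢
  linear_combination (v : ℤ[G]) ^ 2 * hx - 2 * (v : ℤ[G]) * (aug ℤ G x : ℤ[G]) * hxJ +
    (aug ℤ G x : ℤ[G]) ^ 2 * hJJ - (v : ℤ[G]) * J * haug

lemma pow_dvd_coeff_sub_coeff {p f : ℕ} [Fact p.Prime] (hG : ¬ p ∣ Fintype.card G) {x : ℤ[G]}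
    {n m : ℤ} (hx : x * x = n • x + m • indicator ℤ univ) (hn : ((p ^ f : ℕ) : ℤ) ∣ n) (g h : G) :
    ((p ^ f : ℕ) : ℤ) ∣ x.coeff g - x.coeff h := by
  classical
  set v : ℤ := (Fintype.card G : ℤ)
  set y : ℤ[G] := v • x - aug ℤ G x • indicator ℤ univ with hy
  have hyy : y * y = ((n * v : ℤ) : ℤ[G]) * y := card_smul_sub_aug_smul_mul_self hx
  have hydvd : ((p ^ f : ℕ) : ℤ[G]) ∣ y := by
    rw [Nat.cast_pow]
    refine pow_dvd_of_mul_self_eq_mul (isRadical_natCast (by rwa [Nat.card_eq_fintype_card]))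
      (isLeftRegular_natCast (Fact.out : p.Prime).ne_zero) hyy ?_
    simpa using map_dvd (Int.castRingHom ℤ[G]) (hn.mul_right v)
  have hcop : IsCoprime ((p ^ f : ℕ) : ℤ) v := by
    rw [Nat.isCoprime_iff_coprime]
    exact ((Nat.Prime.coprime_iff_not_dvd Fact.out).mpr hG).pow_left f
  refine hcop.dvd_of_dvd_mul_left ?_
  have hycoeff (k : G) : y.coeff k = v * x.coeff k - aug ℤ G x := by
    simp [hy, coeff_indicator, -zsmul_eq_mul]
  have hdiff : v * (x.coeff g - x.coeff h) = y.coeff g - y.coeff h := by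
    rw [hycoeff, hycoeff]
    ring
  rw [hdiff]
  exact dvd_sub (natCast_dvd_iff_coeff.mp hydvd g) (natCast_dvd_iff_coeff.mp hydvd h)

lemma pow_dvd_coeff_of_pow_dvd_aug {p f : ℕ} [Fact p.Prime] (hG : ¬ p ∣ Fintype.card G) {x : ℤ[G]}
    {n m : ℤ} (hx : x * x = n • x + m • indicator ℤ univ) (hn : ((p ^ f : ℕ) : ℤ) ∣ n)
    (haug : ((p ^ f : ℕ) : ℤ) ∣ aug ℤ G x) (g : G) : ((p ^ f : ℕ) : ℤ) ∣ x.coeff g := by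
  have hcop : IsCoprime ((p ^ f : ℕ) : ℤ) (Fintype.card G) := by
    rw [Nat.isCoprime_iff_coprime]
    exact ((Nat.Prime.coprime_iff_not_dvd Fact.out).mpr hG).pow_left f
  have hsum : ((p ^ f : ℕ) : ℤ) ∣ ∑ h, (x.coeff g - x.coeff h) :=
    dvd_sum fun h _ => pow_dvd_coeff_sub_coeff hG hx hn g h
  rw [sum_sub_distrib, ← aug_eq_sum_coeff, dvd_sub_left haug] at hsum
  exact hcop.dvd_of_dvd_mul_left (by simpa using hsum)

end Quotients

section Coefficients

variable {R G A : Type*} [CommRing R] [CommGroup G] [CommGroup A]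

lemma coeff_mul_self_one [Fintype G] {x : R[G]} (hsymm : ∀ g, x.coeff g⁻¹ = x.coeff g) :
    (x * x).coeff 1 = ∑ g, x.coeff g ^ 2 := by
  simp [coeff_mul_eq_sum, hsymm, sq]

lemma coeff_mul_self_one_of_sq_eq_neg [Finite G] {x : R[G]}
    (hsymm : ∀ g, x.coeff g⁻¹ = x.coeff g)
    (hx : ∀ g ≠ 1, x.coeff g ^ 2 = -x.coeff g) :
    (x * x).coeff 1 = x.coeff 1 ^ 2 + x.coeff 1 - aug R G x := by
  classical
  have := Fintype.ofFinite G
  rw [coeff_mul_self_one hsymm, aug_eq_sum_coeff, ← add_sum_erase univ _ (mem_univ 1),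
    ← add_sum_erase univ x.coeff (mem_univ 1),
    sum_congr rfl fun g hg => hx g (ne_of_mem_erase hg), sum_neg_distrib]
  ring

lemma mul_aug_sub_coeff_one_le [Finite G] {x : ℤ[G]} {q : ℤ}
    (hsymm : ∀ g, x.coeff g⁻¹ = x.coeff g) (hnonneg : ∀ g, 0 ≤ x.coeff g)
    (hq : ∀ g, q ∣ x.coeff g) :
    q * (aug ℤ G x - x.coeff 1) ≤ (x * x).coeff 1 - x.coeff 1 ^ 2 := by
  classical
  have := Fintype.ofFinite G
  rw [coeff_mul_self_one hsymm, aug_eq_sum_coeff, ← add_sum_erase univ _ (mem_univ 1),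
    ← add_sum_erase univ (fun g => x.coeff g ^ 2) (mem_univ 1), add_sub_cancel_left,
    add_sub_cancel_left, mul_sum]
  refine sum_le_sum fun g _ => ?_
  rcases (hnonneg g).eq_or_lt with h | h
  · simp [← h]
  · rw [sq]
    exact mul_le_mul_of_nonneg_right (Int.le_of_dvd h (hq g)) h.le

lemma coeff_mapDomainRingHom_inv [Finite G] {x : R[G]}
    (hsymm : ∀ g, x.coeff g⁻¹ = x.coeff g) (f : G →* A) (a : A) :
    (mapDomainRingHom R f x).coeff a⁻¹ = (mapDomainRingHom R f x).coeff a := by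
  classical
  have := Fintype.ofFinite G
  simp only [coeff_mapDomainRingHom, sum_filter]
  exact Fintype.sum_equiv (Equiv.inv G) _ _ fun g => by simp [hsymm, inv_eq_iff_eq_inv]

variable [PartialOrder R] [IsOrderedRing R]

lemma coeff_mapDomainRingHom_nonneg [Finite G] {x : R[G]} (hnonneg : ∀ g, 0 ≤ x.coeff g)
    (f : G →* A) (a : A) : 0 ≤ (mapDomainRingHom R f x).coeff a := by
  classical
  have := Fintype.ofFinite G
  rw [coeff_mapDomainRingHom]
  exact sum_nonneg fun g _ => hnonneg g

lemma coeff_one_le_coeff_mapDomainRingHom_one [Finite G] {x : R[G]} (hnonneg : ∀ g, 0 ≤ x.coeff g)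
    (f : G →* A) : x.coeff 1 ≤ (mapDomainRingHom R f x).coeff 1 := by
  classical
  have := Fintype.ofFinite G
  rw [coeff_mapDomainRingHom]
  exact single_le_sum (fun g _ => hnonneg g) (by simp)

end Coefficients

section Characters

variable {G A : Type*} [CommGroup G] [CommGroup A]

/-- The extension of a complex character of the abelian group `G` to its integral group algebra.
Characters are encoded as additive characters of `Additive G`, for which Mathlib has the
orthogonality relations. -/
noncomputable def charEval (θ : AddChar (Additive G) ℂ) : ℤ[G] →ₐ[ℤ] ℂ :=
  MonoidAlgebra.lift ℤ ℂ G (θ.toMonoidHom.comp (MulEquiv.multiplicativeAdditive G).symm.toMonoidHom)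

lemma charEval_single (θ : AddChar (Additive G) ℂ) (g : G) (r : ℤ) :
    charEval θ (single g r) = r * θ (.ofMul g) := by
  simp [charEval, MulEquiv.multiplicativeAdditive]

lemma charEval_eq_sum [Fintype G] (θ : AddChar (Additive G) ℂ) (x : ℤ[G]) :
    charEval θ x = ∑ g, x.coeff g * θ (.ofMul g) := by
  conv_lhs => rw [← sum_single_coeff x]
  simp [charEval_single]

lemma isIntegral_charEval [Finite G] (θ : AddChar (Additive G) ℂ) (x : ℤ[G]) :
    IsIntegral ℤ (charEval θ x) :=
  (Algebra.IsIntegral.isIntegral x).map (charEval θ)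

lemma sum_charEval [Fintype G] (x : ℤ[G]) :
    ∑ θ, charEval θ x = (Fintype.card G * x.coeff 1 : ℤ) := by
  classical
  simp_rw [charEval_eq_sum]
  rw [sum_comm]
  simp [← mul_sum, AddChar.sum_apply_eq_ite, mul_comm]

lemma charEval_indicator_univ [Fintype G] {θ : AddChar (Additive G) ℂ} (hθ : θ ≠ 0) :
    charEval θ (indicator ℤ univ) = 0 := by
  rw [indicator, map_sum]
  simp only [charEval_single, Int.cast_one, one_mul]
  exact (Additive.ofMul.sum_comp θ).trans (AddChar.sum_eq_zero_iff_ne_zero.mpr hθ)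

lemma charEval_eq_zero_or_eq [Fintype G] {x : ℤ[G]} {n m : ℤ}
    (hx : x * x = n • x + m • indicator ℤ univ) {θ : AddChar (Additive G) ℂ} (hθ : θ ≠ 0) :
    charEval θ x = 0 ∨ charEval θ x = n := by
  have h := congr(charEval θ $hx)
  rw [map_mul, map_add, map_zsmul, map_zsmul, charEval_indicator_univ hθ, smul_zero,
    zsmul_eq_mul] at h
  rw [← sub_eq_zero (b := (n : ℂ)), ← mul_eq_zero]
  linear_combination h

/-- The part of an element of the group algebra supported on a given subgroup. -/
noncomputable def restrict {R : Type*} [Semiring R] (K : Subgroup G) (x : R[G]) : R[G] :=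
  open Classical in ofCoeff (x.coeff.filter (· ∈ K))

open Classical in
lemma coeff_restrict {R : Type*} [Semiring R] (K : Subgroup G) (x : R[G]) (g : G) :
    (restrict K x).coeff g = if g ∈ K then x.coeff g else 0 :=
  Finsupp.filter_apply ..

lemma aug_restrict_ker {R : Type*} [CommRing R] [Finite G] (f : G →* A) (x : R[G]) :
    aug R G (restrict f.ker x) = (mapDomainRingHom R f x).coeff 1 := by
  classical
  have := Fintype.ofFinite G
  rw [aug_eq_sum_coeff, coeff_mapDomainRingHom, sum_filter]
  simp only [coeff_restrict, MonoidHom.mem_ker]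

/-- The character of `G` obtained from a character of `A` by composition with `f : G →* A`. -/
noncomputable def inflate (f : G →* A) (ρ : AddChar (Additive A) ℂ) : AddChar (Additive G) ℂ :=
  ρ.compAddMonoidHom f.toAdditive

lemma inflate_apply (f : G →* A) (ρ : AddChar (Additive A) ℂ) (g : G) :
    inflate f ρ (.ofMul g) = ρ (.ofMul (f g)) := rfl

lemma inflate_neg (f : G →* A) (ρ : AddChar (Additive A) ℂ) :
    inflate f (-ρ) = -inflate f ρ := by
  ext g
  simp [inflate]

lemma inflate_injective {f : G →* A} (hf : Function.Surjective f) :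
    Function.Injective (inflate f) :=
  AddChar.compAddMonoidHom_injective_left _ hf

lemma sum_charEval_add_inflate [Finite G] [Fintype A] (f : G →* A) (θ : AddChar (Additive G) ℂ)
    (x : ℤ[G]) :
    ∑ ρ, charEval (θ + inflate f ρ) x = Fintype.card A * charEval θ (restrict f.ker x) := by
  classical
  have := Fintype.ofFinite G
  simp_rw [charEval_eq_sum, AddChar.add_apply, inflate_apply]
  rw [sum_comm, mul_sum]
  refine sum_congr rfl fun g _ => ?_
  rw [← mul_sum, ← mul_sum, AddChar.sum_apply_eq_ite]
  by_cases hg : f g = 1 <;> simp [coeff_restrict, MonoidHom.mem_ker, hg, mul_comm, mul_left_comm]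

lemma charEval_inflate_restrict_ker [Finite G] (f : G →* A) (ρ : AddChar (Additive A) ℂ)
    (x : ℤ[G]) : charEval (inflate f ρ) (restrict f.ker x) = aug ℤ G (restrict f.ker x) := by
  classical
  have := Fintype.ofFinite G
  rw [charEval_eq_sum, aug_eq_sum_coeff, Int.cast_sum]
  refine sum_congr rfl fun g _ => ?_
  by_cases hg : f g = 1 <;> simp [coeff_restrict, inflate_apply, hg]

lemma exists_intCast_eq_of_isIntegral {x : ℂ} (hx : IsIntegral ℤ x) {a c : ℤ} (ha : a ≠ 0)
    (h : a * x = c) : ∃ u : ℤ, x = u := by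
  have hrat : x = algebraMap ℚ ℂ (c / a) := by
    rw [eq_div_of_mul_eq (Int.cast_ne_zero.mpr ha) ((mul_comm x a).trans h)]
    simp
  rw [hrat, isIntegral_algebraMap_iff (FaithfulSMul.algebraMap_injective ℚ ℂ)] at hx
  obtain ⟨u, hu⟩ := IsIntegrallyClosed.isIntegral_iff.mp hx
  exact ⟨u, by rw [hrat, ← hu]; simp⟩

lemma mul_le_gcd_mul_sq {n N u z : ℤ} (hn : 0 < n) (hN : 0 < N) (hz : 0 ≤ z) (h : N * u = n * z) :
    n * u ≤ Int.gcd n N * u ^ 2 := by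
  have hu : 0 ≤ u := nonneg_of_mul_nonneg_right (h ▸ mul_nonneg hn.le hz) hN
  have hdvd : n ∣ Int.gcd n N * u := Int.coe_gcd n N ▸ dvd_gcd_mul_of_dvd_mul ⟨z, h⟩
  rw [sq, ← mul_assoc]
  rcases hu.eq_or_lt with rfl | hu
  · simp
  · refine mul_le_mul_of_nonneg_right (Int.le_of_dvd ?_ hdvd) hu.le
    have : 0 < Int.gcd n N := Int.gcd_pos_of_ne_zero_left _ hn.ne'
    positivity

variable [Fintype G] [Fintype A] {x : ℤ[G]} {n m : ℤ}

lemma exists_charEval_restrict_eq (hn : 0 < n) (hx : x * x = n • x + m • indicator ℤ univ)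
    (f : G →* A) {θ : AddChar (Additive G) ℂ} (hθ : θ ∉ Set.range (inflate f)) :
    ∃ u : ℤ, charEval θ (restrict f.ker (n • 1 - x)) = u ∧
      n * u ≤ Int.gcd n (Fintype.card A) * u ^ 2 := by
  have hne (ρ : AddChar (Additive A) ℂ) : θ + inflate f ρ ≠ 0 := fun h =>
    hθ ⟨-ρ, by rw [eq_neg_of_add_eq_zero_left h, inflate_neg]⟩
  have hterm (ρ : AddChar (Additive A) ℂ) : ∃ z : ℕ,
      charEval (θ + inflate f ρ) (n • 1 - x) = n * z := by
    rw [map_sub, map_zsmul, map_one]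
    rcases charEval_eq_zero_or_eq hx (hne ρ) with h | h
    · exact ⟨1, by simp [h]⟩
    · exact ⟨0, by simp [h]⟩
  choose z hz using hterm
  have hsum : (Fintype.card A : ℤ) * charEval θ (restrict f.ker (n • 1 - x)) =
      (n * ∑ ρ, (z ρ : ℤ) : ℤ) := by
    rw [Int.cast_natCast, ← sum_charEval_add_inflate, sum_congr rfl fun ρ _ => hz ρ]
    push_cast
    rw [mul_sum]
  have hA : 0 < (Fintype.card A : ℤ) := mod_cast Fintype.card_pos
  obtain ⟨u, hu⟩ := exists_intCast_eq_of_isIntegral (isIntegral_charEval _ _) hA.ne' hsum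
  exact ⟨u, hu, mul_le_gcd_mul_sq hn hA (sum_nonneg fun ρ _ => (z ρ).cast_nonneg)
    (by rw [hu] at hsum; exact_mod_cast hsum)⟩

lemma mul_card_mul_coeff_restrict_sub_le (hn : 0 < n)
    (hx : x * x = n • x + m • indicator ℤ univ) {f : G →* A} (hf : Function.Surjective f)
    {y : ℤ[G]} (hy : y = restrict f.ker (n • 1 - x)) :
    n * (Fintype.card G * y.coeff 1 - Fintype.card A * aug ℤ G y) ≤
      Int.gcd n (Fintype.card A) *
        (Fintype.card G * (y * y).coeff 1 - Fintype.card A * aug ℤ G y ^ 2) := by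
  classical
  set q : ℤ := (Int.gcd n (Fintype.card A) : ℤ)
  have hu (θ : AddChar (Additive G) ℂ) : ∃ u : ℤ, charEval θ y = u ∧
      (θ ∈ Set.range (inflate f) → u = aug ℤ G y) ∧
      (θ ∉ Set.range (inflate f) → n * u ≤ q * u ^ 2) := by
    by_cases hθ : θ ∈ Set.range (inflate f)
    · obtain ⟨ρ, rfl⟩ := hθ
      exact ⟨_, hy ▸ charEval_inflate_restrict_ker f ρ _, by simp, by simp⟩
    · obtain ⟨u, hu, hle⟩ := exists_charEval_restrict_eq hn hx f hθ
      exact ⟨u, hy ▸ hu, by simp [hθ], by simp [hle, q]⟩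
  choose u hu hu_inflate hu_le using hu
  have hsum : ∑ θ, u θ = Fintype.card G * y.coeff 1 := by
    have := sum_charEval y
    simp only [hu] at this
    exact_mod_cast this
  have hsum_sq : ∑ θ, u θ ^ 2 = Fintype.card G * (y * y).coeff 1 := by
    have := sum_charEval (y * y)
    simp only [map_mul, hu] at this
    simp only [sq]
    exact_mod_cast this
  have hcard : Fintype.card (AddChar (Additive A) ℂ) = Fintype.card A :=
    AddChar.card_eq.trans (Fintype.card_additive A)
  -- By orthogonality, the claim is `n u ≤ q u²` summed over the characters not inflated from `A`.
  have hle : ∑ θ ∈ univ.image (inflate f), (q * u θ ^ 2 - n * u θ) ≤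
      ∑ θ, (q * u θ ^ 2 - n * u θ) :=
    sum_le_sum_of_subset_of_nonneg (subset_univ _) fun θ _ hθ =>
      sub_nonneg.mpr (hu_le θ (by simpa using hθ))
  rw [sum_image (inflate_injective hf).injOn,
    sum_congr rfl fun ρ _ => by rw [hu_inflate _ ⟨ρ, rfl⟩], sum_const, card_univ, hcard,
    sum_sub_distrib, ← mul_sum, ← mul_sum, hsum, hsum_sq, nsmul_eq_mul] at hle
  linear_combination hle

end Characters

section Parameters

lemma exists_isPGroup_quotient_and_not_dvd_index (G : Type*) [CommGroup G] [Finite G] (p : ℕ)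
    [Fact p.Prime] :
    ∃ P Q : Subgroup G, IsPGroup p (G ⧸ Q) ∧ ¬ p ∣ P.index ∧ Nat.card P = Q.index := by
  obtain ⟨P⟩ : Nonempty (Sylow p G) := inferInstance
  obtain ⟨Q, hPQ⟩ := Subgroup.exists_right_complement'_of_coprime P.card_coprime_index
  refine ⟨P, Q, ?_, P.not_dvd_index, hPQ.index_eq_card.symm⟩
  obtain ⟨a, ha⟩ := IsPGroup.iff_card.mp P.isPGroup'
  exact IsPGroup.of_card (hPQ.index_eq_card.trans ha)

lemma exists_gcd_card_eq_pow_of_isPGroup {A : Type*} [CommGroup A] [Fintype A] {p : ℕ}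
    [Fact p.Prime] (hA : IsPGroup p A) (n : ℤ) : ∃ k, Int.gcd n (Fintype.card A) = p ^ k := by
  obtain ⟨a, ha⟩ := IsPGroup.iff_card.mp hA
  rw [Nat.card_eq_fintype_card] at ha
  have hdvd : Int.gcd n (Fintype.card A) ∣ p ^ a :=
    ha ▸ Int.natCast_dvd_natCast.mp (Int.gcd_dvd_right _ _)
  obtain ⟨k, -, hk⟩ := (Nat.dvd_prime_pow Fact.out).mp hdvd
  exact ⟨k, hk⟩

lemma gcd_mul_succ_dvd_succ {s t α N c : ℤ} (hc : N * c = s * t + α)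
    (hcop : IsCoprime (Int.gcd (s + t + 1 - α) N : ℤ) (s + 1)) (hdvd : s + 1 ∣ t + 1) :
    (Int.gcd (s + t + 1 - α) N : ℤ) * (s + 1) ∣ t + 1 := by
  refine hcop.mul_dvd (hcop.dvd_of_dvd_mul_right ?_) hdvd
  have hsum : (t + 1) * (s + 1) = (s + t + 1 - α) + N * c := by linear_combination -hc
  exact hsum ▸ dvd_add (Int.gcd_dvd_left _ _) ((Int.gcd_dvd_right _ _).mul_right c)

lemma mul_add_lt_eigenvalue_mul {s t α N q c : ℤ} (hα : α < s) (hs : 0 < s) (hq : 1 < q)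
    (hqN : q ≤ N) (ht : q * (s + 1) ≤ t + 1) (hc : N * c = s * t + α) (h : q * s ≤ s - α + α * N) :
    q * ((s + 1) * (s - α) + c) < (s + t + 1 - α) * s := by
  by_contra! hle
  have hx : 0 < s - α := sub_pos.mpr hα
  have hN : 0 < N := by lia
  have hsum : (s - α) * (N - 1) ≤ s * (N - q) := by linear_combination h
  have htrace : s * (t + 1) * (N - q) ≤ (s - α) * (q * N * (s + 1) - q - N * s) := by
    linear_combination N * hle + q * hc
  have hchain : (s - α) * (q * (s + 1) * (N - 1)) ≤ (s - α) * (q * N * (s + 1) - q - N * s) :=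
    calc (s - α) * (q * (s + 1) * (N - 1)) = q * (s + 1) * ((s - α) * (N - 1)) := by ring
      _ ≤ q * (s + 1) * (s * (N - q)) := by gcongr
      _ ≤ (t + 1) * (s * (N - q)) := by gcongr
      _ = s * (t + 1) * (N - q) := by ring
      _ ≤ _ := htrace
  have hNq : s * N ≤ s * q := by linear_combination le_of_mul_le_mul_left hchain hx
  obtain rfl : N = q := le_antisymm (le_of_mul_le_mul_left hNq hs) hqN
  have : 0 < (s - α) * (N - 1) := mul_pos hx (sub_pos.mpr hq)
  lia

end Parameters

end SingerGroup

namespace IsPGSinger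

open Finset MonoidAlgebra SingerGroup
open scoped Pointwise

section Pencil

variable {G : Type*} [Fintype G] [DecidableEq G] {𝓛 : Set (Finset G)}

open Classical in
/-- The set of lines through a given point. -/
noncomputable def pencil (𝓛 : Set (Finset G)) (x : G) : Finset (Finset G) :=
  {L | L ∈ 𝓛 ∧ x ∈ L}

lemma mem_pencil {x : G} {L : Finset G} : L ∈ pencil 𝓛 x ↔ L ∈ 𝓛 ∧ x ∈ L := by
  simp [pencil]

end Pencil

variable {G : Type*} [CommGroup G] [DecidableEq G] {𝓛 : Set (Finset G)} {s t α : ℕ}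

section Lines

variable (hpg : IsPGSinger G 𝓛 s t α)
include hpg

lemma smul_mem (g : G) {L : Finset G} (hL : L ∈ 𝓛) : g • L ∈ 𝓛 :=
  hpg.translate g L hL

lemma smul_mem_iff (g : G) {L : Finset G} : g • L ∈ 𝓛 ↔ L ∈ 𝓛 :=
  ⟨fun h => inv_smul_smul g L ▸ hpg.smul_mem g⁻¹ h, hpg.smul_mem g⟩

lemma card_inter_le_one {L M : Finset G} (hL : L ∈ 𝓛) (hM : M ∈ 𝓛) (hLM : L ≠ M) :
    #(L ∩ M) ≤ 1 := by
  rw [← Set.ncard_coe_finset, coe_inter]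
  exact hpg.line_inter L hL M hM hLM

lemma card_inter_eq_one {L M : Finset G} (hL : L ∈ 𝓛) (hM : M ∈ 𝓛) (hLM : L ≠ M)
    (h : (L ∩ M).Nonempty) : #(L ∩ M) = 1 :=
  le_antisymm (hpg.card_inter_le_one hL hM hLM) h.card_pos

lemma exists_mem : ∃ L, L ∈ 𝓛 := by
  obtain ⟨L, hL, -⟩ := Set.nonempty_of_ncard_ne_zero ((hpg.point_deg 1).trans_ne t.succ_ne_zero)
  exact ⟨L, hL⟩

end Lines

variable [Fintype G]

/-- The sum in the integral group algebra of all lines through `1`. Its coefficient at `g` is the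
number of lines through `1` and `g`, so up to a multiple of `1` it is the partial difference set
of points collinear with `1`. -/
noncomputable def collinearity (𝓛 : Set (Finset G)) : ℤ[G] :=
  ∑ L ∈ pencil 𝓛 1, indicator ℤ L

lemma coeff_collinearity (g : G) : (collinearity 𝓛).coeff g = #{L ∈ pencil 𝓛 1 | g ∈ L} := by
  simp [collinearity, coeff_sum, Finsupp.finsetSum_apply, coeff_indicator]

lemma coeff_collinearity_nonneg (g : G) : 0 ≤ (collinearity 𝓛).coeff g := by
  rw [coeff_collinearity]
  positivity

variable (hpg : IsPGSinger G 𝓛 s t α)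
include hpg

lemma card_pencil (x : G) : #(pencil 𝓛 x) = t + 1 := by
  rw [← hpg.point_deg x, ← Set.ncard_coe_finset]
  congr 1
  ext L
  simp [mem_pencil]

lemma coeff_collinearity_mul_inv (x y : G) :
    (collinearity 𝓛).coeff (x * y⁻¹) = #{L ∈ pencil 𝓛 x | y ∈ L} := by
  rw [coeff_collinearity, Nat.cast_inj]
  refine (card_equiv (MulAction.toPerm y⁻¹) fun L => ?_).symm
  simp [mem_pencil, hpg.smul_mem_iff, mem_inv_smul_finset_iff, and_right_comm, and_assoc]

lemma coeff_collinearity_one : (collinearity 𝓛).coeff 1 = t + 1 := by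
  rw [coeff_collinearity, filter_true_of_mem fun L hL => (mem_pencil.mp hL).2, hpg.card_pencil]
  simp

lemma coeff_collinearity_inv (g : G) :
    (collinearity 𝓛).coeff g⁻¹ = (collinearity 𝓛).coeff g := by
  rw [← one_mul g⁻¹, hpg.coeff_collinearity_mul_inv, coeff_collinearity]

lemma coeff_collinearity_le_one {g : G} (hg : g ≠ 1) : (collinearity 𝓛).coeff g ≤ 1 := by
  rw [coeff_collinearity]
  norm_cast
  refine card_le_one.mpr fun L hL M hM => ?_
  simp only [mem_filter, mem_pencil] at hL hM
  by_contra hLM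
  refine hg (card_le_one.mp (hpg.card_inter_le_one hL.1.1 hM.1.1 hLM) g ?_ 1 ?_) <;>
    simp [hL, hM]

lemma sum_card_inter_of_mem {L : Finset G} (hL : L ∈ 𝓛) {x : G} (hx : x ∈ L) :
    ∑ M ∈ pencil 𝓛 x, #(L ∩ M) = s + 1 + t := by
  have hLx : L ∈ pencil 𝓛 x := mem_pencil.mpr ⟨hL, hx⟩
  rw [← add_sum_erase _ _ hLx, inter_self, hpg.line_card L hL]
  have hone : ∀ M ∈ (pencil 𝓛 x).erase L, #(L ∩ M) = 1 := fun M hM => by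
    obtain ⟨hML, hM⟩ := mem_erase.mp hM
    obtain ⟨hM, hxM⟩ := mem_pencil.mp hM
    exact hpg.card_inter_eq_one hL hM hML.symm ⟨x, mem_inter.mpr ⟨hx, hxM⟩⟩
  rw [sum_congr rfl hone, sum_const, card_erase_of_mem hLx, hpg.card_pencil]
  simp

lemma sum_card_inter_of_notMem {L : Finset G} (hL : L ∈ 𝓛) {x : G} (hx : x ∉ L) :
    ∑ M ∈ pencil 𝓛 x, #(L ∩ M) = α := by
  have hterm : ∀ M ∈ pencil 𝓛 x, #(L ∩ M) = if ∃ y ∈ L, y ∈ M then 1 else 0 := fun M hM => by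
    obtain ⟨hM, hxM⟩ := mem_pencil.mp hM
    split_ifs with h
    · obtain ⟨y, hy⟩ := h
      exact hpg.card_inter_eq_one hL hM (by rintro rfl; exact hx hxM) ⟨y, mem_inter.mpr hy⟩
    · exact card_eq_zero.mpr (by ext y; simpa using fun hyL hyM => h ⟨y, hyL, hyM⟩)
  rw [sum_congr rfl hterm, sum_boole, Nat.cast_id, ← hpg.alpha_ax x L hL hx,
    ← Set.ncard_coe_finset]
  congr 1
  ext M
  simp [mem_pencil, and_assoc]

lemma collinearity_mul_indicator {L : Finset G} (hL : L ∈ 𝓛) :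
    collinearity 𝓛 * indicator ℤ L =
      (s + t + 1 - α : ℤ) • indicator ℤ L + (α : ℤ) • indicator ℤ univ := by
  ext x
  have hcoeff : (collinearity 𝓛 * indicator ℤ L).coeff x =
      (∑ M ∈ pencil 𝓛 x, #(L ∩ M) : ℕ) := by
    simp_rw [coeff_mul_indicator, hpg.coeff_collinearity_mul_inv, ← filter_mem_eq_inter]
    exact_mod_cast sum_card_bipartiteAbove_eq_sum_card_bipartiteBelow (· ∈ ·)
  by_cases hx : x ∈ L
  · rw [hcoeff, hpg.sum_card_inter_of_mem hL hx]
    simp only [coeff_add, coeff_smul, Finsupp.add_apply, Finsupp.smul_apply, coeff_indicator, hx,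
      mem_univ, if_true, smul_eq_mul]
    push_cast
    ring
  · rw [hcoeff, hpg.sum_card_inter_of_notMem hL hx]
    simp only [coeff_add, coeff_smul, Finsupp.add_apply, Finsupp.smul_apply, coeff_indicator, hx,
      mem_univ, if_true, if_false, smul_eq_mul]
    ring

lemma collinearity_mul_self :
    collinearity 𝓛 * collinearity 𝓛 =
      (s + t + 1 - α : ℤ) • collinearity 𝓛 + (α * (t + 1) : ℤ) • indicator ℤ univ := by
  have hterm : ∀ L ∈ pencil 𝓛 1, collinearity 𝓛 * indicator ℤ L =
      (s + t + 1 - α : ℤ) • indicator ℤ L + (α : ℤ) • indicator ℤ univ := fun L hL =>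
    hpg.collinearity_mul_indicator (mem_pencil.mp hL).1
  conv_lhs => rw [collinearity, mul_sum]
  rw [← collinearity, sum_congr rfl hterm, sum_add_distrib, ← smul_sum, ← collinearity, sum_const,
    hpg.card_pencil, ← natCast_zsmul, smul_smul]
  congr 2
  push_cast
  ring

lemma aug_collinearity : aug ℤ G (collinearity 𝓛) = (t + 1) * (s + 1) := by
  have hterm : ∀ L ∈ pencil 𝓛 1, aug ℤ G (indicator ℤ L) = s + 1 := fun L hL => by
    simp [aug_indicator, hpg.line_card L (mem_pencil.mp hL).1]
  rw [collinearity, map_sum, sum_congr rfl hterm, sum_const, hpg.card_pencil]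
  simp

lemma mul_card_eq : α * Fintype.card G = (s + 1) * (s * t + α) := by
  obtain ⟨L, hL⟩ := hpg.exists_mem
  have h := congr(aug ℤ G $(hpg.collinearity_mul_indicator hL))
  simp only [map_mul, map_add, map_zsmul, aug_indicator, hpg.aug_collinearity,
    hpg.line_card L hL, card_univ, smul_eq_mul] at h
  zify
  push_cast at h
  linear_combination -h

lemma card_mul_eq : Fintype.card G * (t + 1) = Nat.card 𝓛 * (s + 1) := by
  classical
  have h := sum_card_bipartiteAbove_eq_sum_card_bipartiteBelow (s := univ) (t := 𝓛.toFinset)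
    fun (x : G) (L : Finset G) => x ∈ L
  have hpoint (x : G) : #(𝓛.toFinset.bipartiteAbove (· ∈ ·) x) = t + 1 := by
    rw [← hpg.card_pencil x]
    congr 1
    ext L
    simp [mem_pencil, bipartiteAbove]
  have hline : ∀ L ∈ 𝓛.toFinset, #(univ.bipartiteBelow (· ∈ ·) L) = s + 1 := fun L hL => by
    simp [bipartiteBelow, hpg.line_card L (by simpa using hL)]
  simpa [hpoint, sum_congr rfl hline, Nat.card_eq_card_toFinset] using h

lemma card_dvd_of_rigidType (hrig : RigidType G 𝓛) : Fintype.card G ∣ Nat.card 𝓛 := by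
  let lines : SubMulAction G (Finset G) := ⟨𝓛, fun g _ hL => hpg.smul_mem g hL⟩
  have hfree (L : lines) : MulAction.stabilizer G L = ⊥ :=
    (Subgroup.eq_bot_iff_forall _).mpr fun g hg => hrig g L L.2 congr($(hg).1)
  have hcard := Nat.card_congr (MulAction.selfEquivOrbitsQuotientProd hfree)
  rw [Nat.card_prod, Nat.card_eq_fintype_card (α := G)] at hcard
  exact Dvd.intro_left _ hcard.symm

omit [Fintype G] in
lemma succ_dvd_succ_of_rigidType [Finite G] (hrig : RigidType G 𝓛) : s + 1 ∣ t + 1 := by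
  have := Fintype.ofFinite G
  obtain ⟨k, hk⟩ := hpg.card_dvd_of_rigidType hrig
  refine ⟨k, Nat.eq_of_mul_eq_mul_left (Fintype.card_pos (α := G)) ?_⟩
  rw [hpg.card_mul_eq, hk]
  ring

lemma exists_coeff_collinearity_eq_one (hs : 0 < s) :
    ∃ g, (collinearity 𝓛).coeff g = 1 := by
  by_contra! h
  have hzero : ∀ g ∈ univ.erase (1 : G), (collinearity 𝓛).coeff g = 0 := fun g hg => by
    have := hpg.coeff_collinearity_le_one (ne_of_mem_erase hg)
    have := coeff_collinearity_nonneg (𝓛 := 𝓛) g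
    have := h g
    lia
  have haug := hpg.aug_collinearity
  rw [aug_eq_sum_coeff, ← add_sum_erase univ _ (mem_univ 1), sum_eq_zero hzero,
    hpg.coeff_collinearity_one] at haug
  have hts : (0 : ℤ) < (t + 1) * s := by positivity
  linarith

lemma exists_coeff_collinearity_eq_zero (hαs : α < s) (ht : 0 < t) :
    ∃ g, (collinearity 𝓛).coeff g = 0 := by
  by_contra! h
  have hone : ∀ g ∈ univ.erase (1 : G), (collinearity 𝓛).coeff g = 1 := fun g hg => by
    have := hpg.coeff_collinearity_le_one (ne_of_mem_erase hg)
    have := coeff_collinearity_nonneg (𝓛 := 𝓛) g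
    have := h g
    lia
  have hcard : Fintype.card G = s * t + s + 1 := by
    have haug := hpg.aug_collinearity
    rw [aug_eq_sum_coeff, ← add_sum_erase univ _ (mem_univ 1), sum_congr rfl hone,
      hpg.coeff_collinearity_one, sum_const, card_erase_of_mem (mem_univ _), card_univ,
      nsmul_one, Nat.cast_sub Fintype.card_pos] at haug
    zify
    push_cast at haug
    linear_combination haug
  have hmul := hpg.mul_card_eq
  rw [hcard] at hmul
  have : s * t * α = s * t * (s + 1) := by linear_combination hmul
  have hst : 0 < s * t := Nat.mul_pos (by lia) ht
  have := Nat.eq_of_mul_eq_mul_left hst this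
  lia

lemma prime_dvd_card (hαs : α < s) (ht : 0 < t) {p : ℕ} (hp : p.Prime)
    (hpn : (p : ℤ) ∣ s + t + 1 - α) : p ∣ Fintype.card G := by
  have := Fact.mk hp
  by_contra hpG
  obtain ⟨g, hg⟩ := hpg.exists_coeff_collinearity_eq_one (by lia)
  obtain ⟨h, hh⟩ := hpg.exists_coeff_collinearity_eq_zero hαs ht
  have hdvd := pow_dvd_coeff_sub_coeff (f := 1) hpG hpg.collinearity_mul_self (by simpa) g h
  rw [hg, hh, pow_one, sub_zero] at hdvd
  exact hp.one_lt.ne' (by simpa using Int.eq_one_of_dvd_one (by positivity) hdvd)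

section Restriction

variable (K : Subgroup G)

lemma coeff_restrict_sub_collinearity_inv (g : G) :
    (restrict K ((s + t + 1 - α : ℤ) • 1 - collinearity 𝓛)).coeff g⁻¹ =
      (restrict K ((s + t + 1 - α : ℤ) • 1 - collinearity 𝓛)).coeff g := by
  classical
  simp only [coeff_restrict, inv_mem_iff, coeff_sub, coeff_smul, Finsupp.sub_apply,
    Finsupp.smul_apply, hpg.coeff_collinearity_inv, one_def, coeff_single, Finsupp.single_apply,
    eq_comm (a := (1 : G)), inv_eq_one]

lemma coeff_restrict_sub_collinearity_one :
    (restrict K ((s + t + 1 - α : ℤ) • 1 - collinearity 𝓛)).coeff 1 = (s - α : ℤ) := by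
  simp only [coeff_restrict, one_mem, if_true, coeff_sub, coeff_smul, Finsupp.sub_apply,
    Finsupp.smul_apply, hpg.coeff_collinearity_one, one_def, coeff_single, Finsupp.single_eq_same,
    smul_eq_mul]
  ring

lemma coeff_restrict_sub_collinearity_sq {g : G} (hg : g ≠ 1) :
    (restrict K ((s + t + 1 - α : ℤ) • 1 - collinearity 𝓛)).coeff g ^ 2 =
      -(restrict K ((s + t + 1 - α : ℤ) • 1 - collinearity 𝓛)).coeff g := by
  simp only [coeff_restrict, coeff_sub, coeff_smul, Finsupp.sub_apply, Finsupp.smul_apply, one_def,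
    coeff_single, Finsupp.single_eq_of_ne hg, smul_zero, zero_sub]
  have hle := hpg.coeff_collinearity_le_one hg
  have hnonneg := coeff_collinearity_nonneg (𝓛 := 𝓛) g
  interval_cases (collinearity 𝓛).coeff g <;> split_ifs <;> norm_num

end Restriction

variable {A : Type*} [CommGroup A] [Fintype A] {f : G →* A}

lemma mapDomainRingHom_collinearity_mul_self (hf : Function.Surjective f) :
    mapDomainRingHom ℤ f (collinearity 𝓛) * mapDomainRingHom ℤ f (collinearity 𝓛) =
      (s + t + 1 - α : ℤ) • mapDomainRingHom ℤ f (collinearity 𝓛) +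
        (α * (t + 1) * Nat.card f.ker : ℤ) • indicator ℤ univ := by
  rw [← map_mul, hpg.collinearity_mul_self, map_add, map_zsmul, map_zsmul,
    mapDomainRingHom_indicator_univ hf, smul_smul]

lemma card_mul_coeff_mapDomainRingHom_collinearity (hf : Function.Surjective f) {p : ℕ}
    [Fact p.Prime] (hA : IsPGroup p A) (hps : ¬ p ∣ s + 1) :
    (Fintype.card A : ℤ) * ((mapDomainRingHom ℤ f (collinearity 𝓛)).coeff 1 - (s + t + 1 - α)) =
      s * t + α := by
  classical
  obtain ⟨L, hL⟩ := hpg.exists_mem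
  have haug : aug ℤ A (mapDomainRingHom ℤ f (indicator ℤ L)) = s + 1 := by
    rw [aug_mapDomainRingHom, aug_indicator, hpg.line_card L hL, Nat.cast_succ]
  have hmul : (mapDomainRingHom ℤ f (collinearity 𝓛) - (s + t + 1 - α : ℤ) • 1) *
      mapDomainRingHom ℤ f (indicator ℤ L) = (α * Nat.card f.ker : ℤ) • indicator ℤ univ := by
    rw [sub_mul, ← map_mul, hpg.collinearity_mul_indicator hL, map_add, map_zsmul, map_zsmul,
      smul_one_mul, add_sub_cancel_left, mapDomainRingHom_indicator_univ hf, smul_smul]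
  have hquot := aug_smul_eq_of_isPGroup_of_mul_eq hA (by rw [haug]; exact_mod_cast hps) hmul
  have hcoeff := congr(($hquot).coeff 1)
  rw [haug] at hcoeff
  simp only [coeff_smul, coeff_sub, Finsupp.smul_apply, Finsupp.sub_apply, smul_eq_mul,
    coeff_indicator, mem_univ, if_true, one_def, coeff_single, Finsupp.single_eq_same] at hcoeff
  have hcard : (Nat.card f.ker : ℤ) * Fintype.card A = Fintype.card G :=
    mod_cast card_ker_mul_card hf
  have hparam : (α * Fintype.card G : ℤ) = (s + 1) * (s * t + α) := mod_cast hpg.mul_card_eq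
  have hs : (s + 1 : ℤ) ≠ 0 := by positivity
  apply mul_left_cancel₀ hs
  linear_combination (Fintype.card A : ℤ) * hcoeff + α * hcard + hparam

omit [Fintype G] in
lemma pow_mul_le_sub_add_mul_card_ker [Finite G] (hf : Function.Surjective f) {p k : ℕ}
    [Fact p.Prime] (hA : ¬ p ∣ Fintype.card A) (hn : ((p ^ k : ℕ) : ℤ) ∣ s + t + 1 - α)
    (hdvd : p ^ k ∣ t + 1) (hle : p ^ k * (s + 1) ≤ t + 1) :
    ((p ^ k : ℕ) : ℤ) * s ≤ s - α + α * Nat.card f.ker := by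
  have := Fintype.ofFinite G
  set φ := mapDomainRingHom ℤ f (collinearity 𝓛)
  set q := p ^ k
  have hφφ := hpg.mapDomainRingHom_collinearity_mul_self hf
  have haug : aug ℤ A φ = (t + 1) * (s + 1) := by
    rw [aug_mapDomainRingHom, hpg.aug_collinearity]
  have hdvd_aug : (q : ℤ) ∣ aug ℤ A φ := haug ▸ Dvd.dvd.mul_right (mod_cast hdvd) _
  have hle_coeff : (t + 1 : ℤ) ≤ φ.coeff 1 :=
    hpg.coeff_collinearity_one ▸ coeff_one_le_coeff_mapDomainRingHom_one coeff_collinearity_nonneg f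
  have hsum := mul_aug_sub_coeff_one_le
    (coeff_mapDomainRingHom_inv hpg.coeff_collinearity_inv f)
    (coeff_mapDomainRingHom_nonneg coeff_collinearity_nonneg f)
    (pow_dvd_coeff_of_pow_dvd_aug hA hφφ hn hdvd_aug)
  have hone : (φ * φ).coeff 1 = (s + t + 1 - α) * φ.coeff 1 + α * (t + 1) * Nat.card f.ker := by
    classical
    simp only [φ, hφφ, coeff_add, coeff_smul, Finsupp.add_apply, Finsupp.smul_apply,
      coeff_indicator, mem_univ, if_true, smul_eq_mul, mul_one]
  rw [hone, haug] at hsum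
  have hle' : (q * (s + 1) : ℤ) ≤ t + 1 := mod_cast hle
  have hqs : (s - α : ℤ) ≤ q * s := by
    have : s ≤ q * s := Nat.le_mul_of_pos_left s (pow_pos (Fact.out : p.Prime).pos k)
    lia
  have hprod : 0 ≤ (φ.coeff 1 - (t + 1)) * (φ.coeff 1 - (s - α) - q) :=
    mul_nonneg (by lia) (by linear_combination hle_coeff + hle' + hqs)
  refine le_of_mul_le_mul_left (a := (t + 1 : ℤ)) ?_ (by positivity)
  linear_combination hsum + hprod

lemma eigenvalue_mul_le_gcd_mul (hf : Function.Surjective f) (hα : α < s) (ht : 0 < t) {c : ℤ}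
    (hc : (mapDomainRingHom ℤ f (collinearity 𝓛)).coeff 1 = s + t + 1 - α + c)
    (hcard : Fintype.card A * c = s * t + α) :
    (s + t + 1 - α : ℤ) * s ≤
      Int.gcd (s + t + 1 - α) (Fintype.card A) * ((s + 1) * (s - α) + c) := by
  set y : ℤ[G] := restrict f.ker ((s + t + 1 - α : ℤ) • 1 - collinearity 𝓛) with hy
  set q : ℤ := (Int.gcd (s + t + 1 - α) (Fintype.card A) : ℤ)
  have hn : (0 : ℤ) < s + t + 1 - α := by lia
  have hyy := coeff_mul_self_one_of_sq_eq_neg (hpg.coeff_restrict_sub_collinearity_inv f.ker)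
    fun g hg => hpg.coeff_restrict_sub_collinearity_sq f.ker hg
  have htrace := mul_card_mul_coeff_restrict_sub_le hn hpg.collinearity_mul_self hf hy
  have haug : aug ℤ G y = -c := by
    rw [hy, aug_restrict_ker, map_sub (mapDomainRingHom ℤ f), map_zsmul,
      map_one (mapDomainRingHom ℤ f)]
    simp only [coeff_sub, coeff_smul, Finsupp.sub_apply, Finsupp.smul_apply, one_def, coeff_single,
      Finsupp.single_eq_same, hc, smul_eq_mul]
    ring
  rw [← hy] at hyy
  rw [hyy, haug, hy, hpg.coeff_restrict_sub_collinearity_one] at htrace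
  have hparam : (α * Fintype.card G : ℤ) = (s + 1) * (s * t + α) := mod_cast hpg.mul_card_eq
  have hpos : (0 : ℤ) < s * t + α := by
    have : 0 < s := by lia
    positivity
  refine le_of_mul_le_mul_left (a := (s * t + α) * (s - α + 1 : ℤ)) ?_ (mul_pos hpos (by lia))
  have hscaled := mul_le_mul_of_nonneg_left htrace (Nat.cast_nonneg (α := ℤ) α)
  linear_combination hscaled -
    ((s + t + 1 - α) * (s - α) - q * ((s - α) ^ 2 + (s - α) + c)) * hparam -
    ((s + t + 1 - α) * α + q * α * c) * hcard

omit [Fintype G] in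
lemma prime_dvd_succ_of_quotients [Finite G] {B : Type*} [CommGroup B] [Fintype B] {π : G →* B}
    {p : ℕ} [Fact p.Prime] (hαs : α < s) (hdvd : s + 1 ∣ t + 1) (hpn : (p : ℤ) ∣ s + t + 1 - α)
    (hf : Function.Surjective f) (hA : IsPGroup p A) (hpA : p ∣ Fintype.card A)
    (hπ : Function.Surjective π) (hB : ¬ p ∣ Fintype.card B)
    (hker : Nat.card π.ker = Fintype.card A) : p ∣ s + 1 := by
  have := Fintype.ofFinite G
  by_contra hps
  have hst : s + 1 ≤ t + 1 := Nat.le_of_dvd t.succ_pos hdvd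
  have hcard := hpg.card_mul_coeff_mapDomainRingHom_collinearity hf hA hps
  set c : ℤ := (mapDomainRingHom ℤ f (collinearity 𝓛)).coeff 1 - (s + t + 1 - α)
  obtain ⟨k, hk⟩ := exists_gcd_card_eq_pow_of_isPGroup hA (s + t + 1 - α)
  have hqn : ((p ^ k : ℕ) : ℤ) ∣ s + t + 1 - α := hk ▸ Int.gcd_dvd_left _ _
  have hqA : p ^ k ∣ Fintype.card A := hk ▸ Int.natCast_dvd_natCast.mp (Int.gcd_dvd_right _ _)
  have hpq : p ∣ p ^ k :=
    hk ▸ Int.natCast_dvd_natCast.mp (Int.dvd_coe_gcd hpn (Int.natCast_dvd_natCast.mpr hpA))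
  have hcop : IsCoprime ((p ^ k : ℕ) : ℤ) (s + 1) :=
    mod_cast Nat.isCoprime_iff_coprime.mpr
      (((Nat.Prime.coprime_iff_not_dvd Fact.out).mpr hps).pow_left k)
  have hqt : p ^ k * (s + 1) ∣ t + 1 := by
    have h := gcd_mul_succ_dvd_succ hcard (hk ▸ hcop) (mod_cast hdvd)
    rw [hk] at h
    exact_mod_cast h
  have hqt_le : p ^ k * (s + 1) ≤ t + 1 := Nat.le_of_dvd t.succ_pos hqt
  have hq : 1 < p ^ k := (Fact.out : p.Prime).one_lt.trans_le
    (Nat.le_of_dvd (pow_pos (Fact.out : p.Prime).pos k) hpq)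
  have hqN : p ^ k ≤ Fintype.card A := Nat.le_of_dvd Fintype.card_pos hqA
  have h₁ := hpg.pow_mul_le_sub_add_mul_card_ker hπ hB hqn (dvd_of_mul_right_dvd hqt) hqt_le
  have h₂ := hpg.eigenvalue_mul_le_gcd_mul hf hαs (by lia) (add_sub_cancel _ _).symm hcard
  rw [hker] at h₁
  rw [hk] at h₂
  exact h₂.not_gt <| mul_add_lt_eigenvalue_mul (mod_cast hαs) (by lia) (mod_cast hq)
    (mod_cast hqN) (mod_cast hqt_le) hcard h₁

end IsPGSinger

open IsPGSinger SingerGroup MonoidAlgebra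

theorem rigid_type_prime_divisors_of_delta_general
    (G : Type*) [CommGroup G] [Finite G] [DecidableEq G] {s t α : ℕ} (hαs : α < s)
    {𝓛 : Set (Finset G)} (hpg : IsPGSinger G 𝓛 s t α) (hdvd : s + 1 ∣ t + 1) :
    ∀ p : ℕ, p.Prime → p ∣ (s + t - α + 1) ^ 2 → p ∣ s + 1 := by
  intro p hp hpn
  have := Fact.mk hp
  have := Fintype.ofFinite G
  have ht : 0 < t := by have := Nat.le_of_dvd t.succ_pos hdvd; lia
  replace hpn : (p : ℤ) ∣ s + t + 1 - α := by
    convert Int.natCast_dvd_natCast.mpr (hp.dvd_of_dvd_pow hpn) using 1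
    lia
  obtain ⟨P, Q, hQ, hP, hPQ⟩ := exists_isPGroup_quotient_and_not_dvd_index G p
  have hpP : p ∣ Nat.card P := by
    have hpG := hpg.prime_dvd_card hαs ht hp hpn
    rw [← Nat.card_eq_fintype_card, ← P.card_mul_index] at hpG
    exact (hp.dvd_mul.mp hpG).resolve_right hP
  let := Fintype.ofFinite (G ⧸ P)
  let := Fintype.ofFinite (G ⧸ Q)
  rw [Subgroup.index, Nat.card_eq_fintype_card (α := G ⧸ _)] at hP hPQ
  refine hpg.prime_dvd_succ_of_quotients hαs hdvd hpn (QuotientGroup.mk'_surjective Q) hQ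
    (hPQ ▸ hpP) (QuotientGroup.mk'_surjective P) hP ?_
  rw [QuotientGroup.ker_mk', hPQ]

/-- for a proper `pg(s,t,α)` of rigid type with abelian Singer group `G`
and `s > 2α - 1`, every prime divisor of `Δ = (s+t-α+1)²` divides `s+1`. -/
theorem rigid_type_prime_divisors_of_delta
    (G : Type*) [CommGroup G] [Fintype G] [DecidableEq G]
    (s t α : ℕ) (hα2 : 2 ≤ α) (hαs : α < s) (hαt : α < t)
    (𝓛 : Set (Finset G)) (hpg : IsPGSinger G 𝓛 s t α) (hrig : RigidType G 𝓛)
    (hs : 2 * α - 1 < s) :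
    ∀ p : ℕ, p.Prime → p ∣ (s + t - α + 1) ^ 2 → p ∣ s + 1 :=
  rigid_type_prime_divisors_of_delta_general G hαs hpg (hpg.succ_dvd_succ_of_rigidType hrig)
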